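/- The normal-trace functions up to total order k span the full polynomial space of degree k on the triangle F: for every integer k ≥ 1, the linear span (as functions on F) of the constant function 1, the functions h_j(y) := p̂_j^3(2y−1) − (1−y) p_{j−1}^3(2y−1) for 1 ≤ j ≤ k, and the functions g_{ij}(x,y) := p_i^0(x/(1−y)) (1−y)^i p_j^{2i+1}(2y−1) for i ≥ 1, j ≥ 0, i + j ≤ k, equals the space of restrictions to F of all real polynomials in two variables of total degree at most k. -/

import Mathlib

open MeasureTheory

/-- Jacobi polynomial with parameters `(α, 0)`, via the Rodrigues formula. -/
noncomputable def jacobiP (α : ℝ) (n : ℕ) (x : ℝ) : ℝ :=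
  1 / (2 ^ n * (n.factorial : ℝ) * (1 - x) ^ α) *
    iteratedDeriv n (fun t : ℝ => (1 - t) ^ α * (t ^ 2 - 1) ^ n) x

/-- Integrated Jacobi polynomial `p̂_n^α`. -/
noncomputable def jacobiPhat (α : ℝ) (n : ℕ) (x : ℝ) : ℝ :=
  if n = 0 then 1 else ∫ ξ in (-1 : ℝ)..x, jacobiP α (n - 1) ξ

/-- The triangle `F = {(x,y) : 0 ≤ y ≤ 1, |x| ≤ 1 - y}`. -/
def faceTri : Set (ℝ × ℝ) := {p | 0 ≤ p.2 ∧ p.2 ≤ 1 ∧ |p.1| ≤ 1 - p.2}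

/-- Restriction of a function on `ℝ²` to the triangle `F`. -/
def restr (f : ℝ × ℝ → ℝ) : faceTri → ℝ := fun p => f p.val

/-- The normal-trace function `g_{ij}(x,y) = p_i^0(x/(1-y)) (1-y)^i p_j^{2i+1}(2y-1)`. -/
noncomputable def gFun (i j : ℕ) (p : ℝ × ℝ) : ℝ :=
  jacobiP 0 i (p.1 / (1 - p.2)) * (1 - p.2) ^ i
    * jacobiP (2 * (i : ℝ) + 1) j (2 * p.2 - 1)

/-- The normal-trace function `h_j(y) = p̂_j^3(2y-1) - (1-y) p_{j-1}^3(2y-1)`. -/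
noncomputable def hFun (j : ℕ) (y : ℝ) : ℝ :=
  jacobiPhat 3 j (2 * y - 1) - (1 - y) * jacobiP 3 (j - 1) (2 * y - 1)

/-- The set of normal-trace functions up to total order `k`, restricted to `F`:
the constant `1`, the `h_j` for `1 ≤ j ≤ k`, and the `g_{ij}` for `i ≥ 1`, `i + j ≤ k`. -/
noncomputable def traceFamily (k : ℕ) : Set (faceTri → ℝ) :=
  {restr fun _ => 1}
    ∪ {f | ∃ j : ℕ, 1 ≤ j ∧ j ≤ k ∧ f = restr fun p => hFun j p.2}
    ∪ {f | ∃ i j : ℕ, 1 ≤ i ∧ i + j ≤ k ∧ f = restr (gFun i j)}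

/-- Restrictions to `F` of all real polynomials in two variables of total degree
at most `k`. -/
def polyRestrictions (k : ℕ) : Set (faceTri → ℝ) :=
  {f | ∃ q : MvPolynomial (Fin 2) ℝ, q.totalDegree ≤ k ∧
    f = restr fun p => MvPolynomial.eval ![p.1, p.2] q}

/-!
For a polynomial `p`, the function `p (x / (1 - y)) * (1 - y) ^ i` is the homogenization of `p` in
degree `i` evaluated at `(x, 1 - y)`. Hence `g_{ij}` is, modulo lower powers of `x` and within total
degree `i + j`, a nonzero multiple of `x ^ i` times a polynomial in `y` of degree exactly `j`. The
functions `1, h_1, h_2, …` are polynomials in `y` of degrees `0, 1, 2, …`. So the trace functions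
are triangular with respect to the monomials `x ^ i * y ^ j`.
-/

section Spans

open Polynomial Submodule

variable {R M A : Type*} [CommRing R] [AddCommGroup M] [Module R M] [CommRing A] [Algebra R A]

lemma sup_span_image_congr {ι : Type*} {N : Submodule R M} {u w : ι → M} {s : Set ι}
    (h : ∀ j ∈ s, u j - w j ∈ N) : N ⊔ span R (u '' s) = N ⊔ span R (w '' s) := by
  have le_of_sub_mem : ∀ {u w : ι → M}, (∀ j ∈ s, u j - w j ∈ N) →
      N ⊔ span R (u '' s) ≤ N ⊔ span R (w '' s) := by
    intro u w h
    refine sup_le le_sup_left (span_le.2 (Set.image_subset_iff.2 fun j hj => ?_))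
    rw [Set.mem_preimage, ← sub_add_cancel (u j) (w j)]
    exact add_mem_sup (h j hj) (subset_span (Set.mem_image_of_mem w hj))
  exact le_antisymm (le_of_sub_mem h) (le_of_sub_mem fun j hj => by
    simpa only [neg_sub] using N.neg_mem (h j hj))

lemma span_image_sequence_eq_map_degreeLT {S : Sequence R}
    (hS : ∀ j, IsUnit (S j).leadingCoeff) (L : R[X] →ₗ[R] M) (m : ℕ) :
    span R ((fun j => L (S j)) '' Set.Iio m) = (degreeLT R m).map L := by
  rw [← S.span_degreeLT fun j _ => hS j, map_span, Set.image_image]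

/-- Bidegrees `(i, j)` of total degree at most `k` with `i < n`. Taking `n = k + 1` gives all
bidegrees of total degree at most `k`; smaller `n` are the stages of the induction on `i`. -/
def indexTrapezoid (n k : ℕ) : Set (ℕ × ℕ) := {ij | ij.1 < n ∧ ij.1 + ij.2 ≤ k}

lemma indexTrapezoid_zero (k : ℕ) : indexTrapezoid 0 k = ∅ := by
  simp [indexTrapezoid]

lemma indexTrapezoid_succ (n k : ℕ) :
    indexTrapezoid (n + 1) k = indexTrapezoid n k ∪ Prod.mk n '' Set.Iio (k + 1 - n) := by
  ext ⟨i, j⟩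
  simp only [indexTrapezoid, Set.mem_ofPred_eq, Set.mem_union, Set.mem_image, Set.mem_Iio,
    Prod.mk.injEq, exists_eq_right_right]
  omega

lemma span_image_indexTrapezoid_succ (v : ℕ × ℕ → M) (n k : ℕ) :
    span R (v '' indexTrapezoid (n + 1) k) =
      span R (v '' indexTrapezoid n k) ⊔ span R ((fun j => v (n, j)) '' Set.Iio (k + 1 - n)) := by
  rw [indexTrapezoid_succ, Set.image_union, span_union, Set.image_image]

variable (R) in
/-- The span of the monomials `x ^ i * y ^ j` with `(i, j)` in `indexTrapezoid n k`. -/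
def monomialSpan (x y : A) (n k : ℕ) : Submodule R A :=
  span R ((fun ij : ℕ × ℕ => x ^ ij.1 * y ^ ij.2) '' indexTrapezoid n k)

lemma monomialSpan_mono_right (x y : A) (n : ℕ) {k l : ℕ} (hkl : k ≤ l) :
    monomialSpan R x y n k ≤ monomialSpan R x y n l :=
  span_mono (Set.image_mono fun _ h => ⟨h.1, h.2.trans hkl⟩)

lemma pow_mul_aeval_mem_monomialSpan (x y : A) {i n k : ℕ} {q : R[X]} (hi : i < n)
    (hq : i + q.natDegree ≤ k) : x ^ i * aeval y q ∈ monomialSpan R x y n k := by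
  rw [aeval_eq_sum_range, Finset.mul_sum]
  refine sum_mem fun j hj => ?_
  rw [mul_smul_comm]
  refine smul_mem _ _ (subset_span ⟨(i, j), ⟨hi, ?_⟩, rfl⟩)
  have := Finset.mem_range.1 hj
  dsimp only
  omega

/-- Multiplication by `x ^ i` after evaluation at `y`, so that `powMulAeval x y i (X ^ j)` is the
monomial `x ^ i * y ^ j`. -/
noncomputable def powMulAeval (x y : A) (i : ℕ) : R[X] →ₗ[R] A :=
  LinearMap.mulLeft R (x ^ i) ∘ₗ (aeval y).toLinearMap

lemma span_pow_mul_pow_eq_map_degreeLT (x y : A) (i m : ℕ) :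
    span R ((fun j => x ^ i * y ^ j) '' Set.Iio m) = (degreeLT R m).map (powMulAeval x y i) := by
  classical
  rw [degreeLT_eq_span_X_pow, map_span, Finset.coe_image, Finset.coe_range, Set.image_image]
  simp [powMulAeval]

/-- Row `i` of the family agrees, modulo rows `m < i`, with `x ^ i` times a sequence of polynomials
in `y` of degrees `0, 1, 2, …`, so the rows can be adjoined one at a time. -/
theorem span_image_indexTrapezoid_eq_monomialSpan {x y : A} {v : ℕ × ℕ → A} {S : ℕ → Sequence R}
    (hS : ∀ i j, IsUnit (S i j).leadingCoeff)
    (hv : ∀ i j, v (i, j) - x ^ i * aeval y (S i j) ∈ monomialSpan R x y i (i + j)) (n k : ℕ) :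
    span R (v '' indexTrapezoid n k) = monomialSpan R x y n k := by
  induction n with
  | zero => simp only [monomialSpan, indexTrapezoid_zero, Set.image_empty]
  | succ n ih =>
    have row_congr : ∀ j ∈ Set.Iio (k + 1 - n),
        v (n, j) - powMulAeval x y n (S n j) ∈ monomialSpan R x y n k := fun j hj =>
      monomialSpan_mono_right x y n (by have := Set.mem_Iio.1 hj; omega) (hv n j)
    calc span R (v '' indexTrapezoid (n + 1) k)
        = monomialSpan R x y n k ⊔ span R ((fun j => v (n, j)) '' Set.Iio (k + 1 - n)) := by
          rw [span_image_indexTrapezoid_succ, ih]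
      _ = monomialSpan R x y n k ⊔ (degreeLT R (k + 1 - n)).map (powMulAeval x y n) := by
          rw [sup_span_image_congr row_congr, span_image_sequence_eq_map_degreeLT (hS n)]
      _ = monomialSpan R x y (n + 1) k := by
          rw [← span_pow_mul_pow_eq_map_degreeLT, monomialSpan, monomialSpan,
            span_image_indexTrapezoid_succ]

lemma map_aeval_restrictTotalDegree_eq_monomialSpan (x y : A) (k : ℕ) :
    (MvPolynomial.restrictTotalDegree (Fin 2) R k).map (MvPolynomial.aeval ![x, y]).toLinearMap =
      monomialSpan R x y (k + 1) k := by
  have aeval_monomial (d : Fin 2 →₀ ℕ) :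
      MvPolynomial.aeval ![x, y] (MvPolynomial.monomial d (1 : R)) = x ^ d 0 * y ^ d 1 := by
    simp [MvPolynomial.aeval_monomial, Finsupp.prod_fintype]
  have degree_eq (d : Fin 2 →₀ ℕ) : (d.sum fun _ e => e) = d 0 + d 1 := by
    simp [Finsupp.sum_fintype]
  rw [MvPolynomial.restrictTotalDegree, MvPolynomial.restrictSupport_eq_span, map_span,
    Set.image_image, monomialSpan]
  congr 1
  ext a
  simp only [Set.mem_image, Set.mem_ofPred_eq, AlgHom.toLinearMap_apply, aeval_monomial, degree_eq,
    indexTrapezoid, Prod.exists]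
  constructor
  · rintro ⟨d, hd, rfl⟩
    exact ⟨d 0, d 1, ⟨by omega, hd⟩, rfl⟩
  · rintro ⟨i, j, ⟨-, hij⟩, rfl⟩
    exact ⟨Finsupp.equivFunOnFinite.symm ![i, j], by simpa using hij, by simp⟩

lemma aeval_homogenize_mul_aeval_sub_mem_monomialSpan (x y : A) (p : R[X]) {q r : R[X]} (i : ℕ)
    {j : ℕ} (hq : q.natDegree ≤ j) (hr : r.natDegree ≤ 1) :
    MvPolynomial.aeval ![x, aeval y r] (p.homogenize i) * aeval y q -
      x ^ i * aeval y (C (p.coeff i) * q) ∈ monomialSpan R x y i (i + j) := by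
  have expansion : MvPolynomial.aeval ![x, aeval y r] (p.homogenize i) * aeval y q =
      ∑ m ∈ Finset.range (i + 1), x ^ m * aeval y (C (p.coeff m) * r ^ (i - m) * q) := by
    simp only [homogenize, Finset.Nat.sum_antidiagonal_eq_sum_range_succ_mk, map_sum,
      Finset.sum_mul]
    refine Finset.sum_congr rfl fun m _ => ?_
    have aeval_term : MvPolynomial.aeval ![x, aeval y r]
        (MvPolynomial.monomial (fun₀ | 0 => m | 1 => i - m) (p.coeff m)) =
          algebraMap R A (p.coeff m) * (x ^ m * aeval y r ^ (i - m)) := by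
      simp [MvPolynomial.aeval_monomial, Finsupp.prod_fintype]
    rw [aeval_term, map_mul, map_mul, aeval_C, map_pow]
    ring
  rw [expansion, Finset.sum_range_succ, Nat.sub_self, pow_zero, mul_one, add_sub_cancel_right]
  refine sum_mem fun m hm => ?_
  have hm : m < i := Finset.mem_range.1 hm
  have degree_le : (C (p.coeff m) * r ^ (i - m) * q).natDegree ≤ (i - m) * 1 + j :=
    natDegree_mul_le_of_le ((natDegree_C_mul_le _ _).trans (natDegree_pow_le_of_le _ hr)) hq
  exact pow_mul_aeval_mem_monomialSpan x y hm (by omega)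

end Spans

section Polynomials

open Polynomial

lemma mvPolynomial_aeval_pair_apply {R ι : Type*} [CommSemiring R] (u w : ι → R)
    (q : MvPolynomial (Fin 2) R) (a : ι) :
    MvPolynomial.aeval ![u, w] q a = MvPolynomial.eval ![u a, w a] q := by
  have eval_pair : ![u a, w a] = fun i => ![u, w] i a :=
    funext (Fin.forall_fin_two.2 ⟨rfl, rfl⟩)
  rw [eval_pair]
  exact MvPolynomial.comp_aeval_apply ![u, w] (Pi.evalAlgHom R (fun _ : ι => R) a) q

lemma eval_zero_of_isHomogeneous {R σ : Type*} [CommSemiring R] {φ : MvPolynomial σ R} {n : ℕ}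
    (hφ : φ.IsHomogeneous n) (hn : n ≠ 0) : MvPolynomial.eval (0 : σ → R) φ = 0 := by
  rw [MvPolynomial.eval_zero, MvPolynomial.constantCoeff_eq]
  exact hφ.coeff_eq_zero (by simpa using hn.symm)

lemma iteratedDeriv_eval {𝕜 : Type*} [NontriviallyNormedField 𝕜] (n : ℕ) (p : 𝕜[X]) :
    iteratedDeriv n (fun t => p.eval t) = fun t => (derivative^[n] p).eval t := by
  induction n generalizing p with
  | zero => simp
  | succ n ih =>
    have deriv_eval : deriv (fun t => p.eval t) = fun t => (derivative p).eval t :=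
      funext fun _ => p.deriv
    rw [iteratedDeriv_succ', deriv_eval, ih, Function.iterate_succ_apply]

lemma degree_iterate_derivative_eq {R : Type*} [Semiring R] [IsAddTorsionFree R] {p : R[X]}
    {d : ℕ} (n : ℕ) (hp : p.degree = (d + n : ℕ)) : (derivative^[n] p).degree = d := by
  induction n generalizing d with
  | zero => exact hp
  | succ n ih =>
    have degree_eq : (derivative^[n] p).degree = (d + 1 : ℕ) :=
      ih (by rw [hp, Nat.add_right_comm, Nat.add_assoc])
    have natDegree_eq := natDegree_eq_of_degree_eq_some degree_eq
    rw [Function.iterate_succ_apply', degree_derivative (by omega), natDegree_eq,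
      Nat.add_sub_cancel]

/-- The antiderivative of a polynomial with zero constant coefficient. -/
noncomputable def antiderivative {K : Type*} [DivisionRing K] (p : K[X]) : K[X] :=
  p.sum fun n a => monomial (n + 1) (a / (n + 1))

lemma derivative_antiderivative {K : Type*} [DivisionRing K] [CharZero K] (p : K[X]) :
    derivative (antiderivative p) = p := by
  conv_rhs => rw [← p.sum_monomial_eq]
  simp only [antiderivative, Polynomial.sum, derivative_sum]
  refine Finset.sum_congr rfl fun n _ => ?_
  rw [derivative_monomial, Nat.add_sub_cancel, Nat.cast_succ,
    div_mul_cancel₀ _ (Nat.cast_add_one_ne_zero n)]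

lemma coeff_succ_antiderivative {K : Type*} [DivisionRing K] [CharZero K] (p : K[X]) (n : ℕ) :
    (antiderivative p).coeff (n + 1) = p.coeff n / (n + 1) := by
  rw [eq_div_iff (Nat.cast_add_one_ne_zero n), ← coeff_derivative, derivative_antiderivative]

lemma natDegree_antiderivative_le {K : Type*} [DivisionRing K] [CharZero K] (p : K[X]) :
    (antiderivative p).natDegree ≤ p.natDegree + 1 := by
  have natDegree_eq := natDegree_derivative (antiderivative p)
  rw [derivative_antiderivative] at natDegree_eq
  omega

lemma integral_eval_eq_eval_antiderivative_sub (p : ℝ[X]) (a b : ℝ) :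
    ∫ t in a..b, p.eval t = (antiderivative p).eval b - (antiderivative p).eval a := by
  refine intervalIntegral.integral_eq_sub_of_hasDerivAt
    (f := fun t => (antiderivative p).eval t) (fun t _ => ?_)
    (p.continuous.intervalIntegrable a b)
  simpa only [derivative_antiderivative] using (antiderivative p).hasDerivAt t

/-- The leading terms of the antiderivative of `p` and of `-(1 - X) * p` have the same sign, so
they do not cancel. -/
lemma degree_antiderivative_sub_one_sub_X_mul {K : Type*} [Field K] [LinearOrder K]
    [IsStrictOrderedRing K] {p : K[X]} {n : ℕ} (hp : p.degree = n) (a : K) {b : K} (hb : 0 ≤ b) :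
    (antiderivative p - C a - C b * ((1 - X) * p)).degree = ((n + 1 : ℕ) : WithBot ℕ) := by
  have natDegree_eq : p.natDegree = n := natDegree_eq_of_degree_eq_some hp
  have one_sub_X_mul_le : ((1 - X) * p).natDegree ≤ 1 + n :=
    natDegree_mul_le_of_le (by compute_degree) natDegree_eq.le
  have coeff_one_sub_X_mul : ((1 - X) * p).coeff (n + 1) = -p.coeff n := by
    rw [sub_mul, one_mul, coeff_sub, coeff_X_mul,
      coeff_eq_zero_of_natDegree_lt (by omega : p.natDegree < n + 1), zero_sub]
  refine degree_eq_of_le_of_coeff_ne_zero (degree_le_of_natDegree_le ?_) ?_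
  · have antiderivative_le := natDegree_antiderivative_le p
    have C_mul_le := natDegree_C_mul_le b ((1 - X) * p)
    exact natDegree_sub_le_of_le (natDegree_sub_C.trans_le (by omega)) (by omega) |>.trans
      (max_self _).le
  · have leading_coeff_eq : (antiderivative p - C a - C b * ((1 - X) * p)).coeff (n + 1) =
        p.coeff n * (1 / (n + 1) + b) := by
      rw [coeff_sub, coeff_sub, coeff_C_succ, coeff_C_mul, coeff_succ_antiderivative,
        coeff_one_sub_X_mul]
      ring
    rw [leading_coeff_eq]
    exact mul_ne_zero (coeff_ne_zero_of_eq_degree hp) (by positivity)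

end Polynomials

section Jacobi

open Polynomial

lemma degree_one_sub_X_pow (a : ℕ) : ((1 - X : ℝ[X]) ^ a).degree = a := by
  have degree_eq : (1 - X : ℝ[X]).degree = 1 := by compute_degree!
  rw [degree_pow, degree_eq, nsmul_one]

/-- The function `(1 - x) ^ a * (x ^ 2 - 1) ^ n` differentiated in the Rodrigues formula, as a
polynomial. -/
noncomputable def rodriguesPoly (a n : ℕ) : ℝ[X] := (1 - X) ^ a * (X ^ 2 - 1) ^ n

lemma degree_rodriguesPoly (a n : ℕ) : (rodriguesPoly a n).degree = (a + n + n : ℕ) := by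
  have degree_eq : (X ^ 2 - 1 : ℝ[X]).degree = 2 := by compute_degree!
  rw [rodriguesPoly, degree_mul, degree_one_sub_X_pow, degree_pow, degree_eq, nsmul_eq_mul,
    add_assoc, ← mul_two]
  push_cast
  rfl

lemma one_sub_X_pow_dvd_iterate_derivative_rodriguesPoly (a n : ℕ) :
    (1 - X) ^ a ∣ derivative^[n] (rodriguesPoly a n) := by
  have one_sub_X_pow_dvd : (1 - X) ^ (a + n) ∣ rodriguesPoly a n := by
    rw [rodriguesPoly, pow_add]
    exact mul_dvd_mul_left _ (pow_dvd_pow_of_dvd ⟨-(1 + X), by ring⟩ n)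
  simpa only [Nat.add_sub_cancel] using
    pow_sub_dvd_iterate_derivative_of_pow_dvd n one_sub_X_pow_dvd

/-- The polynomial with values `jacobiP a n` for a natural parameter `a`. The division is exact
because `(1 - X) ^ (a + n)` divides `rodriguesPoly a n`. -/
noncomputable def jacobiPoly (a n : ℕ) : ℝ[X] :=
  C (1 / (2 ^ n * (n.factorial : ℝ))) * (derivative^[n] (rodriguesPoly a n) / (1 - X) ^ a)

lemma one_sub_X_pow_mul_jacobiPoly (a n : ℕ) :
    (1 - X) ^ a * jacobiPoly a n =
      C (1 / (2 ^ n * (n.factorial : ℝ))) * derivative^[n] (rodriguesPoly a n) := by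
  rw [jacobiPoly, mul_left_comm, EuclideanDomain.mul_div_cancel' ?_
    (one_sub_X_pow_dvd_iterate_derivative_rodriguesPoly a n)]
  exact degree_ne_bot.1 (degree_one_sub_X_pow a ▸ WithBot.natCast_ne_bot a)

lemma degree_jacobiPoly (a n : ℕ) : (jacobiPoly a n).degree = n := by
  have degree_eq := congrArg degree (one_sub_X_pow_mul_jacobiPoly a n)
  rw [degree_mul, degree_one_sub_X_pow, degree_C_mul (by positivity),
    degree_iterate_derivative_eq n (degree_rodriguesPoly a n), Nat.cast_add] at degree_eq
  exact WithBot.add_left_cancel (WithBot.natCast_ne_bot a) degree_eq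

lemma jacobiP_eq_eval_of_pow_ne_zero {a : ℕ} (n : ℕ) {x : ℝ} (hx : (1 - x) ^ a ≠ 0) :
    jacobiP a n x = (jacobiPoly a n).eval x := by
  have rodrigues : (fun t : ℝ => (1 - t) ^ (a : ℝ) * (t ^ 2 - 1) ^ n) =
      fun t => (rodriguesPoly a n).eval t := by
    funext t
    simp [rodriguesPoly]
  have eval_eq := congrArg (eval x) (one_sub_X_pow_mul_jacobiPoly a n)
  simp only [eval_mul, eval_pow, eval_sub, eval_one, eval_X, eval_C] at eval_eq
  rw [jacobiP, rodrigues, iteratedDeriv_eval, Real.rpow_natCast, ← mul_right_inj' hx, eval_eq]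
  field_simp

lemma jacobiP_eq_eval (a n : ℕ) {x : ℝ} (hx : x ≠ 1) :
    jacobiP a n x = (jacobiPoly a n).eval x :=
  jacobiP_eq_eval_of_pow_ne_zero n (pow_ne_zero a (sub_ne_zero.2 hx.symm))

lemma jacobiP_zero_eq_eval (n : ℕ) (x : ℝ) : jacobiP 0 n x = (jacobiPoly 0 n).eval x := by
  simpa using jacobiP_eq_eval_of_pow_ne_zero (a := 0) n (x := x) (by simp)

end Jacobi

section Trace

open Polynomial

lemma degree_comp_two_mul_X_sub_one (p : ℝ[X]) : (p.comp (2 * X - 1)).degree = p.degree := by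
  have degree_eq : (2 * X - 1 : ℝ[X]).degree = 1 := by compute_degree!
  rw [degree_comp (by simp [degree_eq]), degree_eq, mul_one]

/-- The polynomial with values `hFun (n + 1)`; the factor `1 - y` of `hFun` is half of `1 - t` at
`t = 2 * y - 1`. -/
noncomputable def hPoly (n : ℕ) : ℝ[X] :=
  (antiderivative (jacobiPoly 3 n) - C ((antiderivative (jacobiPoly 3 n)).eval (-1)) -
    C (1 / 2) * ((1 - X) * jacobiPoly 3 n)).comp (2 * X - 1)

lemma degree_hPoly (n : ℕ) : (hPoly n).degree = (n + 1 : ℕ) := by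
  rw [hPoly, degree_comp_two_mul_X_sub_one,
    degree_antiderivative_sub_one_sub_X_mul (degree_jacobiPoly 3 n) _ (by norm_num)]

lemma jacobiPhat_succ_eq_eval_sub (a n : ℕ) (x : ℝ) :
    jacobiPhat a (n + 1) x =
      (antiderivative (jacobiPoly a n)).eval x - (antiderivative (jacobiPoly a n)).eval (-1) := by
  rw [jacobiPhat, if_neg n.succ_ne_zero, Nat.add_sub_cancel,
    ← integral_eval_eq_eval_antiderivative_sub]
  refine intervalIntegral.integral_congr_ae ?_
  filter_upwards [Measure.ae_ne volume 1] with ξ hξ _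
  exact jacobiP_eq_eval a n hξ

lemma hFun_succ_eq_eval (n : ℕ) (y : ℝ) : hFun (n + 1) y = (hPoly n).eval y := by
  have phat_eq := jacobiPhat_succ_eq_eval_sub 3 n (2 * y - 1)
  have mul_eq : (1 - y) * jacobiP 3 n (2 * y - 1) =
      (1 - y) * (jacobiPoly 3 n).eval (2 * y - 1) := by
    rcases eq_or_ne y 1 with rfl | hy
    · simp
    · rw [← jacobiP_eq_eval 3 n (fun h => hy (by linarith)), Nat.cast_ofNat]
  rw [Nat.cast_ofNat] at phat_eq
  rw [hFun, phat_eq, Nat.add_sub_cancel, mul_eq, hPoly]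
  simp only [eval_comp, eval_sub, eval_mul, eval_C, eval_X, eval_one, eval_ofNat]
  ring

/-- The members of `traceFamily k`, indexed by `(i, j)`: row `0` consists of `1` and the `h_j`, and
row `i ≥ 1` of the `g_{ij}`. -/
noncomputable def traceFun : ℕ × ℕ → faceTri → ℝ
  | (0, 0) => restr fun _ => 1
  | (0, j + 1) => restr fun p => hFun (j + 1) p.2
  | (i + 1, j) => restr (gFun (i + 1) j)

/-- The coefficients of `x ^ i` in row `i` of `traceFun`, as polynomials in `y`. -/
noncomputable def traceSequence (i : ℕ) : Sequence ℝ where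
  elems' j := match i, j with
    | 0, 0 => 1
    | 0, j + 1 => hPoly j
    | i + 1, j => C ((jacobiPoly 0 (i + 1)).coeff (i + 1)) *
        (jacobiPoly (2 * (i + 1) + 1) j).comp (2 * X - 1)
  degree_eq' j := by
    match i, j with
    | 0, 0 => exact degree_one
    | 0, j + 1 => exact degree_hPoly j
    | i + 1, j =>
      rw [degree_C_mul (coeff_ne_zero_of_eq_degree (degree_jacobiPoly 0 (i + 1))),
        degree_comp_two_mul_X_sub_one, degree_jacobiPoly]

lemma traceFamily_eq_image (k : ℕ) : traceFamily k = traceFun '' indexTrapezoid (k + 1) k := by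
  ext f
  constructor
  · rintro ((rfl | ⟨j, hj, hjk, rfl⟩) | ⟨i, j, hi, hij, rfl⟩)
    · exact ⟨(0, 0), ⟨k.succ_pos, k.zero_le⟩, rfl⟩
    · obtain ⟨n, rfl⟩ := Nat.exists_eq_add_of_le' hj
      exact ⟨(0, n + 1), ⟨k.succ_pos, by simpa using hjk⟩, rfl⟩
    · obtain ⟨n, rfl⟩ := Nat.exists_eq_add_of_le' hi
      exact ⟨(n + 1, j), ⟨by dsimp only; omega, hij⟩, rfl⟩
  · rintro ⟨⟨_ | i, j⟩, ⟨-, hij⟩, rfl⟩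
    · rcases j with _ | j
      · exact Or.inl (Or.inl rfl)
      · exact Or.inl (Or.inr ⟨j + 1, j.succ_pos, by simpa using hij, rfl⟩)
    · exact Or.inr ⟨i + 1, j, i.succ_pos, hij, rfl⟩

lemma polyRestrictions_eq_monomialSpan (k : ℕ) :
    polyRestrictions k = monomialSpan ℝ (restr Prod.fst) (restr Prod.snd) (k + 1) k := by
  have aeval_eq (q : MvPolynomial (Fin 2) ℝ) :
      MvPolynomial.aeval ![restr Prod.fst, restr Prod.snd] q =
        restr fun p => MvPolynomial.eval ![p.1, p.2] q :=
    funext fun p => mvPolynomial_aeval_pair_apply _ _ q p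
  ext f
  rw [← map_aeval_restrictTotalDegree_eq_monomialSpan, SetLike.mem_coe, Submodule.mem_map]
  simp only [MvPolynomial.mem_restrictTotalDegree, AlgHom.toLinearMap_apply, aeval_eq,
    eq_comm (b := f)]
  rfl

/-- At the vertex `y = 1` both sides vanish, because there `x = 0` and `i ≥ 1`. -/
lemma restr_gFun_eq_aeval_homogenize {i : ℕ} (hi : i ≠ 0) (j : ℕ) :
    restr (gFun i j) =
      MvPolynomial.aeval ![restr Prod.fst, aeval (restr Prod.snd) (1 - X : ℝ[X])]
          ((jacobiPoly 0 i).homogenize i) *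
        aeval (restr Prod.snd) ((jacobiPoly (2 * i + 1) j).comp (2 * X - 1)) := by
  funext ⟨⟨x, y⟩, _, _, hxy⟩
  rw [Pi.mul_apply, mvPolynomial_aeval_pair_apply, aeval_fn_apply, aeval_fn_apply]
  simp only [restr, gFun, coe_aeval_eq_eval, eval_sub, eval_one, eval_X, eval_comp, eval_mul,
    eval_ofNat]
  rcases eq_or_ne y 1 with rfl | hy
  · obtain rfl : x = 0 := by simpa using hxy
    have pair_eq_zero : (![0, 1 - 1] : Fin 2 → ℝ) = 0 := by simp
    rw [pair_eq_zero, eval_zero_of_isHomogeneous (isHomogeneous_homogenize _) hi, sub_self,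
      zero_pow hi, mul_zero, zero_mul, zero_mul]
  · have natDegree_le := (natDegree_eq_of_degree_eq_some (degree_jacobiPoly 0 i)).le
    have eval_eq := jacobiP_eq_eval (2 * i + 1) j (x := 2 * y - 1) (fun h => hy (by linarith))
    push_cast at eval_eq
    rw [eval_homogenize natDegree_le ![x, 1 - y] (sub_ne_zero.2 hy.symm), jacobiP_zero_eq_eval,
      eval_eq]
    rfl

lemma traceFun_zero_eq_aeval (j : ℕ) :
    traceFun (0, j) = aeval (restr Prod.snd) (traceSequence 0 j) := by
  funext p
  rw [aeval_fn_apply, coe_aeval_eq_eval]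
  match j with
  | 0 => exact eval_one.symm
  | j + 1 => exact hFun_succ_eq_eval j p.1.2

lemma traceFun_sub_mem_monomialSpan (i j : ℕ) :
    traceFun (i, j) - restr Prod.fst ^ i * aeval (restr Prod.snd) (traceSequence i j) ∈
      monomialSpan ℝ (restr Prod.fst) (restr Prod.snd) i (i + j) := by
  rcases i with _ | i
  · rw [traceFun_zero_eq_aeval, pow_zero, one_mul, sub_self]
    exact zero_mem _
  · have natDegree_eq := natDegree_eq_of_degree_eq_some
      ((degree_comp_two_mul_X_sub_one _).trans (degree_jacobiPoly (2 * (i + 1) + 1) j))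
    rw [traceFun, restr_gFun_eq_aeval_homogenize i.succ_ne_zero]
    exact aeval_homogenize_mul_aeval_sub_mem_monomialSpan _ _ _ _ natDegree_eq.le
      (by compute_degree!)

end Trace

/-- The normal-trace functions up to total order `k` span, as functions on `F`,
exactly the polynomials of total degree at most `k`. -/
theorem trace_span_eq_polynomials (k : ℕ) (hk : 1 ≤ k) :
    (Submodule.span ℝ (traceFamily k) : Set (faceTri → ℝ)) = polyRestrictions k := by
  have leadingCoeff_isUnit (i j : ℕ) : IsUnit (traceSequence i j).leadingCoeff :=
    (Polynomial.leadingCoeff_ne_zero.2 ((traceSequence i).ne_zero j)).isUnit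
  rw [traceFamily_eq_image, polyRestrictions_eq_monomialSpan,
    span_image_indexTrapezoid_eq_monomialSpan leadingCoeff_isUnit traceFun_sub_mem_monomialSpan]
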